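/- arXiv:1311.4066 — 5 statements merged into one kernel-verified Lean document; each statement's English description precedes it below -/
import Mathlib

section
/- Let A = [[1,1],[1,−1]] (a 2×2 complex matrix). For every n ≥ 1, (A⊗…⊗A) applied to the n-arity EQUAL gate |0…0⟩ + |1…1⟩ equals 2·Σ_{b ∈ {0,1}^n with an even number of ones} |b⟩. Moreover, for the n×n skew-symmetric matrix Ξ with Ξ_{ij} = 1 for all i < j, Pf(Ξ|_I) = 1 for every I ⊆ {1,…,n} of even cardinality; consequently the n-arity EQUAL gate is Pfaffian under the homogeneous change of basis A, with (A⊗…⊗A)(|0…0⟩+|1…1⟩) = 2·sPf(Ξ). -/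
/-!
At `b` the transformed EQUAL gate is `∏ᵢ A(bᵢ,0) + ∏ᵢ A(bᵢ,1) = 1 + (-1)^|supp b|`, which is `2` or
`0` according to the parity of `|supp b|`.

For the Pfaffians of the all-ones skew-symmetric matrix, the Laplace expansion along the row of
`min I` and induction reduce `Pf(Ξ|_I) = 1` (with `|I|` even and positive) to the statement that the
signs `(-1)^{rank of i in I}`, `i ∈ I \ {min I}`, add up to `1`. Over all of `I` these alternating
signs cancel (`sum_neg_one_pow_rank`), and `min I` contributes `-1`.
-/

open scoped BigOperators

noncomputable section

/-- Change of basis on an `n`-arity gate: `((A₁⊗…⊗Aₙ)G)(b) = Σ_c (∏ᵢ Aᵢ(bᵢ,cᵢ))·G(c)`. -/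
def cobGate {n : ℕ} (A : Fin n → Matrix (Fin 2) (Fin 2) ℂ) (G : (Fin n → Fin 2) → ℂ) :
    (Fin n → Fin 2) → ℂ :=
  fun b => ∑ c : Fin n → Fin 2, (∏ i, A i (b i) (c i)) * G c

/-- Change of basis on an `n`-arity cogate: `C′(b) = Σ_c C(c)·∏ᵢ Aᵢ⁻¹(cᵢ,bᵢ)`. -/
def cobCogate {n : ℕ} (A : Fin n → Matrix (Fin 2) (Fin 2) ℂ) (C : (Fin n → Fin 2) → ℂ) :
    (Fin n → Fin 2) → ℂ :=
  fun b => ∑ c : Fin n → Fin 2, C c * ∏ i, (A i)⁻¹ (c i) (b i)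

/-- The standard basis vector (ket/bra) at the bitstring `v`. -/
def ket {n : ℕ} (v : Fin n → Fin 2) : (Fin n → Fin 2) → ℂ :=
  fun b => if b = v then 1 else 0

/-- The support of a bitstring. -/
def supp {n : ℕ} (b : Fin n → Fin 2) : Finset (Fin n) :=
  Finset.univ.filter fun i => b i = 1

/-- Fuel-driven Laplace expansion of the Pfaffian of a principal submatrix. -/
def subPfAux {n : ℕ} (Ξ : Matrix (Fin n) (Fin n) ℂ) : ℕ → Finset (Fin n) → ℂ
  | 0, I => if I = ∅ then 1 else 0
  | fuel + 1, I =>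
    if hI : I.Nonempty then
      if Odd I.card then 0
      else
        ∑ i ∈ I.erase (I.min' hI),
          (-1 : ℂ) ^ (I.filter fun j => j ≤ i).card * Ξ (I.min' hI) i *
            subPfAux Ξ fuel ((I.erase (I.min' hI)).erase i)
    else 1

/-- `subPf Ξ I` is the Pfaffian `Pf(Ξ|_I)` of the principal submatrix of `Ξ` on the
rows and columns in `I` (`1` on the empty set, `0` for odd `|I|`). -/
def subPf {n : ℕ} (Ξ : Matrix (Fin n) (Fin n) ℂ) (I : Finset (Fin n)) : ℂ :=
  subPfAux Ξ I.card I

/-- The sub-Pfaffian vector: coordinate `Pf(Ξ|_I)` at the bitstring with support `I`. -/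
def sPf {n : ℕ} (Ξ : Matrix (Fin n) (Fin n) ℂ) : (Fin n → Fin 2) → ℂ :=
  fun b => subPf Ξ (supp b)

/-- The dual sub-Pfaffian vector: coordinate `Pf(Θ|_{Jᶜ})` at the bitstring with support `J`. -/
def sPfStar {n : ℕ} (Θ : Matrix (Fin n) (Fin n) ℂ) : (Fin n → Fin 2) → ℂ :=
  fun b => subPf Θ (supp b)ᶜ

/-- A matrix is skew-symmetric. -/
def IsSkew {n : ℕ} (Ξ : Matrix (Fin n) (Fin n) ℂ) : Prop :=
  ∀ i j, Ξ j i = -Ξ i j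

/-- A gate is Pfaffian under the change of basis `M`. -/
def IsPfaffGate {n : ℕ} (M : Fin n → Matrix (Fin 2) (Fin 2) ℂ) (G : (Fin n → Fin 2) → ℂ) : Prop :=
  ∃ (α : ℂ) (Ξ : Matrix (Fin n) (Fin n) ℂ), IsSkew Ξ ∧ cobGate M G = fun b => α * sPf Ξ b

/-- A cogate is Pfaffian under the change of basis `M`. -/
def IsPfaffCogate {n : ℕ} (M : Fin n → Matrix (Fin 2) (Fin 2) ℂ) (C : (Fin n → Fin 2) → ℂ) : Prop :=
  ∃ (β : ℂ) (Θ : Matrix (Fin n) (Fin n) ℂ), IsSkew Θ ∧ cobCogate M C = fun b => β * sPfStar Θ b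

def matA : Matrix (Fin 2) (Fin 2) ℂ := !![1, 1; 1, -1]

/-- The all-ones-above-the-diagonal skew-symmetric matrix. -/
def onesSkew (n : ℕ) : Matrix (Fin n) (Fin n) ℂ :=
  Matrix.of fun i j => if i < j then 1 else if j < i then -1 else 0

/-- The `k`-th smallest element of `S` (counting from `1`) carries the sign `(-1)^k`, so the sum is
`-1 + 1 - 1 + …` with `|S|` terms. -/
lemma sum_neg_one_pow_rank {n : ℕ} (S : Finset (Fin n)) :
    ∑ i ∈ S, (-1 : ℂ) ^ (S.filter fun j => j ≤ i).card = if Even S.card then 0 else -1 := by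
  induction S using Finset.induction_on_max with
  | empty => simp
  | insert a s ha ih =>
    have hna : a ∉ s := fun h => lt_irrefl _ (ha a h)
    rw [Finset.sum_insert hna, Finset.card_insert_of_notMem hna]
    -- adding the new maximum `a` leaves the ranks of the elements of `s` unchanged
    have h1 : ∑ i ∈ s, (-1 : ℂ) ^ ((insert a s).filter fun j => j ≤ i).card =
        ∑ i ∈ s, (-1 : ℂ) ^ (s.filter fun j => j ≤ i).card := by
      refine Finset.sum_congr rfl fun i hi => ?_
      rw [Finset.filter_insert, if_neg (not_le.mpr (ha i hi))]
    have h2 : ((insert a s).filter fun j => j ≤ a) = insert a s := by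
      refine Finset.filter_true_of_mem fun j hj => ?_
      rcases Finset.mem_insert.mp hj with rfl | h
      · exact le_rfl
      · exact (ha j h).le
    rw [h1, h2, ih, Finset.card_insert_of_notMem hna, pow_succ]
    rcases Nat.even_or_odd s.card with h | h
    · simp [h, h.neg_one_pow, Nat.even_add_one]
    · simp [h.neg_one_pow, Nat.even_add_one, Nat.not_even_iff_odd.mpr h]

/-- Any fuel bound `≥ |I|` suffices; this form is the one stable under the induction, since the fuel
drops by one at each expansion step while the cardinality drops by two. -/
lemma subPfAux_onesSkew {n : ℕ} (fuel : ℕ) : ∀ I : Finset (Fin n), I.card ≤ fuel → Even I.card →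
    subPfAux (onesSkew n) fuel I = 1 := by
  induction fuel with
  | zero =>
    intro I hI _
    have : I = ∅ := Finset.card_eq_zero.mp (Nat.le_zero.mp hI)
    simp [subPfAux, this]
  | succ f ih =>
    intro I hI he
    rw [subPfAux]
    split_ifs with hne ho
    · exact absurd he (Nat.not_even_iff_odd.mpr ho)
    · have hmem := I.min'_mem hne
      have hterm : ∀ i ∈ I.erase (I.min' hne),
          (-1 : ℂ) ^ (I.filter fun j => j ≤ i).card * onesSkew n (I.min' hne) i *
            subPfAux (onesSkew n) f ((I.erase (I.min' hne)).erase i) =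
          (-1 : ℂ) ^ (I.filter fun j => j ≤ i).card := by
        intro i hi
        have hlt : I.min' hne < i := I.min'_lt_of_mem_erase_min' hne hi
        have hc : ((I.erase (I.min' hne)).erase i).card = I.card - 1 - 1 := by
          rw [Finset.card_erase_of_mem hi, Finset.card_erase_of_mem hmem]
        rw [ih _ (by omega) (by rw [hc]; grind)]
        simp [onesSkew, hlt]
      rw [Finset.sum_congr rfl hterm]
      have hsum := sum_neg_one_pow_rank I
      have hmin : (I.filter fun j => j ≤ I.min' hne) = {I.min' hne} := by
        ext j
        simp only [Finset.mem_filter, Finset.mem_singleton]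
        constructor
        · rintro ⟨hj, hle⟩
          exact le_antisymm hle (I.min'_le j hj)
        · rintro rfl
          exact ⟨hmem, le_rfl⟩
      rw [← Finset.add_sum_erase I _ hmem, hmin, if_pos he] at hsum
      simp only [Finset.card_singleton, pow_one] at hsum
      linear_combination hsum
    · rfl

lemma subPf_of_odd {n : ℕ} (Ξ : Matrix (Fin n) (Fin n) ℂ) (I : Finset (Fin n)) (h : Odd I.card) :
    subPf Ξ I = 0 := by
  have hne : I.Nonempty := Finset.card_pos.mp h.pos
  obtain ⟨k, hk⟩ : ∃ k, I.card = k + 1 := ⟨I.card - 1, by have := h.pos; omega⟩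
  rw [subPf, hk, subPfAux, dif_pos hne, if_pos h]

lemma cobGate_equal {n : ℕ} (b : Fin n → Fin 2) :
    cobGate (fun _ : Fin n => matA) (ket (fun _ => 0) + ket (fun _ => 1)) b =
      if Even (supp b).card then (2 : ℂ) else 0 := by
  have h0 : ∀ x : Fin 2, matA x 0 = 1 := by
    intro x; fin_cases x <;> simp [matA]
  have h1 : ∀ x : Fin 2, matA x 1 = if x = 1 then -1 else 1 := by
    intro x; fin_cases x <;> simp [matA]
  have hprod : ∏ i, matA (b i) 1 = (-1 : ℂ) ^ (supp b).card := by
    simp only [h1, supp, Finset.prod_ite, Finset.prod_const, one_pow, mul_one]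
  simp only [cobGate, ket, Pi.add_apply, mul_add, Finset.sum_add_distrib, mul_ite, mul_one,
    mul_zero, Finset.sum_ite_eq', Finset.mem_univ, if_true, hprod, h0, Finset.prod_const_one]
  split_ifs with h
  · rw [h.neg_one_pow]; norm_num
  · rw [(Nat.not_even_iff_odd.mp h).neg_one_pow]; norm_num

/-- gate half of Proposition 3.1. -/
theorem stmt1 (n : ℕ) (hn : 1 ≤ n) :
    (cobGate (fun _ : Fin n => matA) (ket (fun _ => 0) + ket (fun _ => 1)) =
      fun b => if Even (supp b).card then (2 : ℂ) else 0) ∧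
    (∀ I : Finset (Fin n), Even I.card → subPf (onesSkew n) I = 1) ∧
    (cobGate (fun _ : Fin n => matA) (ket (fun _ => 0) + ket (fun _ => 1)) =
      fun b => 2 * sPf (onesSkew n) b) := by
  have hpf : ∀ I : Finset (Fin n), Even I.card → subPf (onesSkew n) I = 1 :=
    fun I hI => subPfAux_onesSkew _ I le_rfl hI
  refine ⟨funext cobGate_equal, hpf, funext fun b => ?_⟩
  rw [cobGate_equal, sPf]
  split_ifs with h
  · rw [hpf _ h, mul_one]
  · rw [subPf_of_odd _ _ (Nat.not_even_iff_odd.mp h), mul_zero]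
end
end

section
/- Let A = [[1,1],[1,−1]]. Let S be any nonempty collection of bitstrings in {0,1}³ that is closed under complementation (b ∈ S implies the bitwise complement b̄ ∈ S), and let G = Σ_{b ∈ S} |b⟩. Then G is Pfaffian under the homogeneous change of basis (A, A, A): there exist α ∈ ℂ and ξ₁₂, ξ₁₃, ξ₂₃ ∈ ℂ such that (A⊗A⊗A)G = α·(|000⟩ + ξ₁₂|110⟩ + ξ₁₃|101⟩ + ξ₂₃|011⟩). (Taking all 15 nonempty complement-closed collections S recovers exactly the 15 3-arity gates listed in the paper's Theorem 4.6, e.g. |000⟩+|111⟩, |100⟩+|011⟩, |000⟩+|100⟩+|011⟩+|111⟩, …, and the sum of all eight basis kets.) -/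
/-!
Write `T = (A ⊗ A ⊗ A) G`. Flipping an input bit `c` multiplies the entry `A(x, c)` by `(-1)^x`.
Since `G` is invariant under complementing all its bits, reindexing the sum defining `T b` along
complementation gives `T b = (-1)^{|b|} T b` (`cobGate_matA_parity`), so `T` vanishes at
bitstrings of odd weight. Moreover the first row of `A` is constantly `1`, so `T 000 = |S|`, which
is nonzero because `S` is nonempty (`cobGate_matA_zero`). Hence `α = |S|` and `ξᵢⱼ = T(eᵢ + eⱼ) / |S|`
work.
-/

open scoped BigOperators

noncomputable section

/-- Bitwise complement of a bitstring. -/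
def bcompl {n : ℕ} (b : Fin n → Fin 2) : Fin n → Fin 2 :=
  fun i => if b i = 0 then 1 else 0

theorem bcompl_involutive {n : ℕ} : Function.Involutive (bcompl (n := n)) := by
  intro b
  funext i
  unfold bcompl
  generalize b i = x
  fin_cases x <;> rfl

theorem matA_flip (x c : Fin 2) :
    matA x (if c = 0 then 1 else 0) = (-1) ^ (x : ℕ) * matA x c := by
  fin_cases x <;> fin_cases c <;> simp [matA]

/-- Complement-invariance of a gate turns into a parity constraint on its transform: at
bitstrings of odd weight the transform equals its own negative. -/
theorem cobGate_matA_parity {n : ℕ} (G : (Fin n → Fin 2) → ℂ) (hG : ∀ c, G (bcompl c) = G c)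
    (b : Fin n → Fin 2) :
    cobGate (fun _ => matA) G b = (∏ i, (-1 : ℂ) ^ (b i : ℕ)) * cobGate (fun _ => matA) G b := by
  unfold cobGate
  rw [Finset.mul_sum]
  refine Fintype.sum_equiv bcompl_involutive.toPerm _ _ fun c => ?_
  have hflip : ∏ i, matA (b i) (c i) =
      (∏ i, (-1 : ℂ) ^ (b i : ℕ)) * ∏ i, matA (b i) (bcompl c i) := by
    rw [← Finset.prod_mul_distrib]
    refine Finset.prod_congr rfl fun i _ => ?_
    rw [bcompl, matA_flip, ← mul_assoc, ← mul_pow]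
    simp
  rw [Function.Involutive.coe_toPerm, hG, hflip, mul_assoc]

theorem cobGate_matA_zero {n : ℕ} (S : Finset (Fin n → Fin 2)) :
    cobGate (fun _ => matA) (fun b => if b ∈ S then (1 : ℂ) else 0) (fun _ => 0) = S.card := by
  have hrow : ∀ c : Fin 2, matA 0 c = 1 := by
    intro c
    fin_cases c <;> simp [matA]
  simp [cobGate, hrow]

/-- arity-3 gate part of Theorem 4.6. -/
theorem stmt6 (S : Finset (Fin 3 → Fin 2)) (hS : S.Nonempty)
    (hcl : ∀ b ∈ S, bcompl b ∈ S) :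
    ∃ α ξ12 ξ13 ξ23 : ℂ,
      cobGate ![matA, matA, matA] (fun b => if b ∈ S then (1 : ℂ) else 0) =
        fun b => α * (ket ![0, 0, 0] b + ξ12 * ket ![1, 1, 0] b
          + ξ13 * ket ![1, 0, 1] b + ξ23 * ket ![0, 1, 1] b) := by
  have hA : ![matA, matA, matA] = fun _ => matA := by
    funext i
    fin_cases i <;> rfl
  have hG : ∀ c, (if bcompl c ∈ S then (1 : ℂ) else 0) = if c ∈ S then 1 else 0 := by
    intro c
    have hiff : bcompl c ∈ S ↔ c ∈ S :=
      ⟨fun h => bcompl_involutive c ▸ hcl _ h, hcl c⟩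
    simp only [hiff]
  have hcard : (S.card : ℂ) ≠ 0 := Nat.cast_ne_zero.mpr hS.card_pos.ne'
  have hzero := cobGate_matA_zero S
  have hpar := cobGate_matA_parity (fun b => if b ∈ S then (1 : ℂ) else 0) hG
  rw [hA]
  generalize cobGate (fun _ => matA) (fun b => if b ∈ S then (1 : ℂ) else 0) = T at *
  have h000 : T ![0, 0, 0] = S.card := by
    rw [← hzero]
    congr 1
    funext i
    fin_cases i <;> rfl
  refine ⟨S.card, T ![1, 1, 0] / S.card, T ![1, 0, 1] / S.card, T ![0, 1, 1] / S.card, ?_⟩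
  funext b
  have hb : b = ![b 0, b 1, b 2] := by
    funext i
    fin_cases i <;> rfl
  rw [hb]
  generalize b 0 = x, b 1 = y, b 2 = z
  have hxyz := hpar ![x, y, z]
  rw [Fin.prod_univ_three] at hxyz
  -- At even weight exactly one ket survives; at odd weight `hxyz` reads `T b = -T b`.
  fin_cases x <;> fin_cases y <;> fin_cases z <;>
    simp [ket, self_eq_neg] at hxyz ⊢ <;> first | assumption | field_simp
end
end

section
/- Let B = [[1,−1],[1/2,1/2]], so B⁻¹ = [[1/2,1],[−1/2,1]]. Let S be any nonempty collection of bitstrings in {0,1}³ closed under complementation, and let C = Σ_{b ∈ S} ⟨b| be the corresponding 3-arity cogate. Then the change of basis of C under (B, B, B), namely C′(b) = Σ_{c∈{0,1}³} C(c)·∏_{i=1}^3 B⁻¹(cᵢ,bᵢ), is Pfaffian: there exist β ∈ ℂ and θ₁₂, θ₁₃, θ₂₃ ∈ ℂ such that C′ = β·(θ₂₃⟨100| + θ₁₃⟨010| + θ₁₂⟨001| + ⟨111|). (Taking all 15 such collections S recovers the 15 3-arity cogates of the paper's Theorem 4.6.) -/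
/-!
Complementing the bit `c` changes `B⁻¹ c 0 = ±1/2` by a sign and leaves `B⁻¹ c 1 = 1` alone.
Reindexing the defining sum of `C′(b)` by complementation therefore gives
`C′(b) = (-1)^z C′(b)` with `z` the number of zeros of `b`, so `C′` vanishes at `000`, `110`, `101`
and `011`. At `111` every product is `1`, so `C′(111) = |S| ≠ 0`; this is `β`, and the remaining
three coordinates divided by `β` are the `θ`s.
-/

open scoped BigOperators

noncomputable section

def matB : Matrix (Fin 2) (Fin 2) ℂ := !![1, -1; 1/2, 1/2]

theorem matB_inv : matB⁻¹ = !![1/2, 1; -1/2, 1] := by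
  apply Matrix.inv_eq_right_inv
  ext i j
  fin_cases i <;> fin_cases j <;> norm_num [matB, Matrix.mul_apply, Fin.sum_univ_two]

theorem bcompl_bcompl {n : ℕ} (b : Fin n → Fin 2) : bcompl (bcompl b) = b := by
  funext i
  have h : ∀ x : Fin 2, (if (if x = 0 then (1 : Fin 2) else 0) = 0 then (1 : Fin 2) else 0) = x := by
    decide
  exact h (b i)

theorem matB_inv_bcompl (x y : Fin 2) :
    matB⁻¹ (if x = 0 then 1 else 0) y = (if y = 0 then -1 else 1) * matB⁻¹ x y := by
  rw [matB_inv]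
  fin_cases x <;> fin_cases y <;> norm_num

/-- The coordinates of a complement-invariant cogate at bitstrings with an odd number of zeros
vanish after the change of basis, the sign `∏ i, (if b i = 0 then -1 else 1)` being `-1`. -/
theorem cobCogate_matB_eq_zero {n : ℕ} (C : (Fin n → Fin 2) → ℂ)
    (hC : ∀ c, C (bcompl c) = C c) (b : Fin n → Fin 2)
    (hb : ∏ i, (if b i = 0 then (-1 : ℂ) else 1) = -1) :
    cobCogate (fun _ => matB) C b = 0 := by
  have h : cobCogate (fun _ => matB) C b = -cobCogate (fun _ => matB) C b := by
    unfold cobCogate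
    rw [← Finset.sum_neg_distrib]
    refine Fintype.sum_equiv (Function.Involutive.toPerm bcompl bcompl_bcompl) _ _ fun c => ?_
    change C c * ∏ i, matB⁻¹ (c i) (b i) = -(C (bcompl c) * ∏ i, matB⁻¹ (bcompl c i) (b i))
    rw [hC]
    simp only [bcompl, matB_inv_bcompl, Finset.prod_mul_distrib, hb]
    ring
  exact self_eq_neg.mp h

theorem cobCogate_matB_ones {n : ℕ} (S : Finset (Fin n → Fin 2)) :
    cobCogate (fun _ => matB) (fun b => if b ∈ S then (1 : ℂ) else 0) (fun _ => 1) = S.card := by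
  have h : ∀ x : Fin 2, matB⁻¹ x 1 = 1 := by
    intro x
    rw [matB_inv]
    fin_cases x <;> rfl
  simp [cobCogate, h]

/-- arity-3 cogate part of Theorem 4.6. -/
theorem stmt7 (S : Finset (Fin 3 → Fin 2)) (hS : S.Nonempty)
    (hcl : ∀ b ∈ S, bcompl b ∈ S) :
    ∃ β θ12 θ13 θ23 : ℂ,
      cobCogate ![matB, matB, matB] (fun b => if b ∈ S then (1 : ℂ) else 0) =
        fun b => β * (θ23 * ket ![1, 0, 0] b + θ13 * ket ![0, 1, 0] b
          + θ12 * ket ![0, 0, 1] b + ket ![1, 1, 1] b) := by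
  have hM : (![matB, matB, matB] : Fin 3 → Matrix (Fin 2) (Fin 2) ℂ) = fun _ => matB := by
    funext i
    fin_cases i <;> rfl
  rw [hM]
  have hC : ∀ c, (fun b => if b ∈ S then (1 : ℂ) else 0) (bcompl c) =
      (fun b => if b ∈ S then (1 : ℂ) else 0) c := by
    intro c
    have h : bcompl c ∈ S ↔ c ∈ S :=
      ⟨fun h => by simpa only [bcompl_bcompl] using hcl _ h, hcl c⟩
    simp only [h]
  have h0 := cobCogate_matB_eq_zero (fun b => if b ∈ S then (1 : ℂ) else 0) hC
  have h1 := cobCogate_matB_ones S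
  have hcard : (S.card : ℂ) ≠ 0 := by exact_mod_cast hS.card_pos.ne'
  generalize cobCogate (fun _ => matB) (fun b => if b ∈ S then (1 : ℂ) else 0) = D at h0 h1 ⊢
  refine ⟨S.card, D ![0, 0, 1] / S.card, D ![0, 1, 0] / S.card, D ![1, 0, 0] / S.card, ?_⟩
  funext b
  have h1' : D ![1, 1, 1] = S.card := by
    rw [← h1]
    congr 1
    decide
  obtain ⟨x, y, z, rfl⟩ : ∃ x y z, b = ![x, y, z] :=
    ⟨b 0, b 1, b 2, by funext i; fin_cases i <;> rfl⟩
  have h0' := h0 ![x, y, z]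
  rw [Fin.prod_univ_three] at h0'
  fin_cases x <;> fin_cases y <;> fin_cases z <;>
    simp [ket, h1', hcard, mul_div_cancel₀] at h0' ⊢ <;> exact h0'
end
end

section
/- Let A = [[1,1],[1,−1]]. For every bitstring b ∈ {0,1}⁴, the 4-arity gate |b⟩ + |b̄⟩ (where b̄ is the bitwise complement of b) is Pfaffian under the homogeneous change of basis (A, A, A, A): there exist α ∈ ℂ and a skew-symmetric matrix Ξ ∈ ℂ^{4×4} such that (A⊗A⊗A⊗A)(|b⟩ + |b̄⟩) = α·sPf(Ξ). -/
/-!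
Write `s i = (-1)^(b i)`. The transform of `|b⟩` at `c` is the character value `∏_{i ∈ supp c} s i`,
and that of `|b̄⟩` is `∏_{i ∈ supp c} (-s i)`, so the transform of the sum is `2 ∏_{i ∈ supp c} s i`
when `|supp c|` is even and `0` otherwise. This is `2 · sPf Ξ` for the skew matrix with
`Ξ i j = s i * s j` above the diagonal: in the Laplace expansion of `Pf(Ξ|_I)` every term is
`± ∏_{i ∈ I} s i`, and the alternating signs over the `|I| - 1` (an odd number of) columns
sum to `1` (`sum_rank_sign`, `subPfAux_rankOne`).
-/

open scoped BigOperators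

noncomputable section

/-- The skew-symmetric matrix with entries `s i * s j` above the diagonal. -/
def rankOneSkew {n : ℕ} (s : Fin n → ℂ) : Matrix (Fin n) (Fin n) ℂ :=
  fun i j => if i < j then s i * s j else if j < i then -(s i * s j) else 0

lemma isSkew_rankOneSkew {n : ℕ} (s : Fin n → ℂ) : IsSkew (rankOneSkew s) := by
  intro i j
  rcases lt_trichotomy i j with h | h | h
  · simp [rankOneSkew, h, h.not_gt, mul_comm]
  · simp [rankOneSkew, h]
  · simp [rankOneSkew, h, h.not_gt, mul_comm]

/-- The alternating sum `-1 + 1 - 1 + ⋯` with one term for each element of `I`, signed by rank. -/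
lemma sum_rank_sign {n : ℕ} (I : Finset (Fin n)) :
    ∑ i ∈ I, (-1 : ℂ) ^ (I.filter fun j => j ≤ i).card = if Odd I.card then -1 else 0 := by
  induction I using Finset.induction_on_max with
  | empty => simp
  | insert a I ha ih =>
    have haI : a ∉ I := fun h => lt_irrefl _ (ha a h)
    have htop : (insert a I).filter (fun j => j ≤ a) = insert a I := by
      rw [Finset.filter_eq_self]
      intro j hj
      rcases Finset.mem_insert.1 hj with rfl | hj
      · exact le_rfl
      · exact (ha j hj).le
    -- a new maximum does not change the ranks of the other elements
    have hold : ∑ i ∈ I, (-1 : ℂ) ^ ((insert a I).filter fun j => j ≤ i).card =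
        ∑ i ∈ I, (-1 : ℂ) ^ (I.filter fun j => j ≤ i).card := by
      refine Finset.sum_congr rfl fun i hi => ?_
      rw [Finset.filter_insert, if_neg (ha i hi).not_ge]
    rw [Finset.sum_insert haI, htop, hold, ih, Finset.card_insert_of_notMem haI]
    rcases Nat.even_or_odd I.card with h | h
    · simp [h.add_one, h.add_one.neg_one_pow, Nat.not_odd_iff_even.2 h]
    · simp [h, h.add_one.neg_one_pow, Nat.not_odd_iff_even.2 h.add_one]

lemma subPfAux_rankOne {n : ℕ} (s : Fin n → ℂ) (fuel : ℕ) (I : Finset (Fin n))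
    (hI : I.card ≤ fuel) :
    subPfAux (rankOneSkew s) fuel I = if Odd I.card then 0 else ∏ i ∈ I, s i := by
  induction fuel generalizing I with
  | zero =>
    obtain rfl : I = ∅ := Finset.card_eq_zero.1 (Nat.le_zero.1 hI)
    simp [subPfAux]
  | succ fuel ih =>
    rw [subPfAux]
    split_ifs with hne hodd hodd
    · rfl
    · set m := I.min' hne with hm
      have hmI : m ∈ I := I.min'_mem hne
      have hterm : ∀ i ∈ I.erase m,
          (-1 : ℂ) ^ (I.filter fun j => j ≤ i).card * rankOneSkew s m i *
            subPfAux (rankOneSkew s) fuel ((I.erase m).erase i) =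
          (-1 : ℂ) ^ (I.filter fun j => j ≤ i).card * ∏ i ∈ I, s i := by
        intro i hi
        have hlt : m < i := I.min'_lt_of_mem_erase_min' hne hi
        have h1 := Finset.card_erase_add_one hmI
        have h2 := Finset.card_erase_add_one hi
        have hev : ¬ Odd ((I.erase m).erase i).card := by
          rw [Nat.odd_iff] at hodd ⊢
          omega
        rw [ih _ (by omega), if_neg hev, rankOneSkew, if_pos hlt,
          ← Finset.mul_prod_erase I s hmI, ← Finset.mul_prod_erase (I.erase m) s hi]
        ring
      -- the minimum has rank one, so it contributes `-1` to the full alternating sum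
      have hmin : I.filter (fun j => j ≤ m) = {m} := by
        ext j
        simp only [Finset.mem_filter, Finset.mem_singleton]
        exact ⟨fun h => le_antisymm h.2 (I.min'_le j h.1), by rintro rfl; exact ⟨hmI, le_rfl⟩⟩
      have hsum := sum_rank_sign I
      rw [← Finset.add_sum_erase I _ hmI, hmin, if_neg hodd, Finset.card_singleton,
        pow_one] at hsum
      rw [Finset.sum_congr rfl hterm, ← Finset.sum_mul]
      linear_combination (∏ i ∈ I, s i) * hsum
    · simp [Finset.not_nonempty_iff_eq_empty.1 hne] at hodd
    · simp [Finset.not_nonempty_iff_eq_empty.1 hne]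

lemma cobGate_ket {n : ℕ} (A : Fin n → Matrix (Fin 2) (Fin 2) ℂ) (v c : Fin n → Fin 2) :
    cobGate A (ket v) c = ∏ i, A i (c i) (v i) := by
  simp [cobGate, ket]

lemma cobGate_add {n : ℕ} (A : Fin n → Matrix (Fin 2) (Fin 2) ℂ) (G H : (Fin n → Fin 2) → ℂ)
    (c : Fin n → Fin 2) : cobGate A (G + H) c = cobGate A G c + cobGate A H c := by
  simp [cobGate, mul_add, Finset.sum_add_distrib]

/-- Complementing the bit `y` flips the sign of the nontrivial character, in row `1` of `matA`. -/
lemma matA_compl (x y : Fin 2) :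
    matA x y = (if x = 1 then matA 1 y else 1) ∧
      matA x (if y = 0 then 1 else 0) = if x = 1 then -matA 1 y else 1 := by
  fin_cases x <;> fin_cases y <;> simp [matA]

/-- complemented-pair 4-arity gates of Theorem 4.6 are Pfaffian under `A`. -/
theorem stmt8 (b : Fin 4 → Fin 2) :
    ∃ (α : ℂ) (Ξ : Matrix (Fin 4) (Fin 4) ℂ), IsSkew Ξ ∧
      cobGate ![matA, matA, matA, matA] (ket b + ket (bcompl b)) =
        fun c => α * sPf Ξ c := by
  -- row `1` of `matA` is `y ↦ (-1)^y`
  refine ⟨2, rankOneSkew fun i => matA 1 (b i), isSkew_rankOneSkew _, ?_⟩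
  have hA : ∀ i : Fin 4, (![matA, matA, matA, matA] : Fin 4 → _) i = matA := by
    intro i
    fin_cases i <;> rfl
  funext c
  have h1 : ∏ i, matA (c i) (b i) = ∏ i ∈ supp c, matA 1 (b i) := by
    rw [supp, Finset.prod_filter]
    exact Finset.prod_congr rfl fun i _ => (matA_compl _ _).1
  have h2 : ∏ i, matA (c i) (bcompl b i) = ∏ i ∈ supp c, -matA 1 (b i) := by
    rw [supp, Finset.prod_filter]
    exact Finset.prod_congr rfl fun i _ => (matA_compl _ _).2
  simp only [cobGate_add, cobGate_ket, hA]
  rw [h1, h2, Finset.prod_neg, sPf, subPf, subPfAux_rankOne _ _ _ le_rfl]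
  split_ifs with h
  · rw [h.neg_one_pow]
    ring
  · rw [(Nat.not_odd_iff_even.1 h).neg_one_pow]
    ring
end
end

section
/- The 4-arity gate G = |0000⟩ + |1000⟩ + |0100⟩ + |0010⟩ + |0111⟩ + |1011⟩ + |1101⟩ + |1111⟩ (which is invariant under complementation of bitstrings) is not Pfaffian under any change of basis: there do not exist invertible 2×2 complex matrices A₁, A₂, A₃, A₄, a scalar α ∈ ℂ, and a skew-symmetric matrix Ξ ∈ ℂ^{4×4} such that (A₁⊗A₂⊗A₃⊗A₄)G = α·sPf(Ξ). -/
/-!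
Flatten a 4-arity gate to a `4 × 4` matrix `M` with rows indexed by the first two wires and columns
by the last two, and let `J = ε ⊗ ε` with `ε` the standard symplectic form. Since `Aᵀ ε A = det A • ε`
for `2 × 2` matrices, a change of basis conjugates `P = M J Mᵀ J` by `A₁ ⊗ A₂` and scales it by
`l = det A₁ det A₂ det A₃ det A₄` (`covP_cobGate`).

For the given gate, `M` is singular (two rows agree) and `P` has eigenvalues `0, 0, -2, -2`, with a
nontrivial Jordan block at `-2`; in particular `P² ≠ -2 P`. A gate proportional to a sub-Pfaffian
vector vanishes on odd bitstrings, so its `M` splits into two `2 × 2` blocks, and the matchgate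
identity says that the two block determinants sum to zero. As their product is `± det M = 0`, both
vanish, so each block `B` of its `P` is singular and satisfies `B² = tr(B) B`. Comparing the traces
of `P` and `P²` with the known spectrum shows that both blocks have trace `-2 l`, hence
`P² = -2 l P` (`covP_sq_of_even`), and undoing the conjugation gives a contradiction.
-/

open scoped BigOperators

noncomputable section

/-- The complement-invariant 4-arity gate of Example 4.7. -/
def exGate : (Fin 4 → Fin 2) → ℂ :=
  ket ![0, 0, 0, 0] + ket ![1, 0, 0, 0] + ket ![0, 1, 0, 0] + ket ![0, 0, 1, 0]
    + ket ![0, 1, 1, 1] + ket ![1, 0, 1, 1] + ket ![1, 1, 0, 1] + ket ![1, 1, 1, 1]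

open Matrix Kronecker

/-- The `4 × 4` flattening of a 4-arity gate along the split `(1,2 | 3,4)` of its wires. -/
def flat (T : (Fin 4 → Fin 2) → ℂ) : Matrix (Fin 2 × Fin 2) (Fin 2 × Fin 2) ℂ :=
  Matrix.of fun r c => T ![r.1, r.2, c.1, c.2]

/-- The standard symplectic form on `ℂ²`. -/
def symp : Matrix (Fin 2) (Fin 2) ℂ := !![0, 1; -1, 0]

/-- The symmetric bilinear form `ε ⊗ ε` on `ℂ² ⊗ ℂ²`. -/
def formJ : Matrix (Fin 2 × Fin 2) (Fin 2 × Fin 2) ℂ := symp ⊗ₖ symp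

/-- The covariant `M J Mᵀ J` of a gate with flattening `M`; a change of basis conjugates it by
`A₁ ⊗ A₂` and scales it by the product of the determinants. -/
def covP (T : (Fin 4 → Fin 2) → ℂ) : Matrix (Fin 2 × Fin 2) (Fin 2 × Fin 2) ℂ :=
  flat T * formJ * (flat T)ᵀ * formJ

/-- The lexicographic indexing of pairs of bits by `Fin 4`. -/
def idx : Fin 2 × Fin 2 ≃ Fin 4 := finProdFinEquiv

lemma idx00 : idx (0, 0) = 0 := rfl
lemma idx01 : idx (0, 1) = 1 := rfl
lemma idx10 : idx (1, 0) = 2 := rfl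
lemma idx11 : idx (1, 1) = 3 := rfl

/-- The matrix of `formJ` in lexicographic order. -/
def gramJ : Matrix (Fin 4) (Fin 4) ℂ := !![0, 0, 0, 1; 0, 0, -1, 0; 0, -1, 0, 0; 1, 0, 0, 0]

lemma formJ_eq : formJ = gramJ.submatrix idx idx := by
  rw [← Matrix.ext_iff]
  simp [Prod.forall, Fin.forall_fin_two, idx00, idx01, idx10, idx11, formJ, symp, gramJ]

lemma covP_eq {T : (Fin 4 → Fin 2) → ℂ} {N : Matrix (Fin 4) (Fin 4) ℂ}
    (h : flat T = N.submatrix idx idx) :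
    covP T = (N * gramJ * Nᵀ * gramJ).submatrix idx idx := by
  simp only [covP, h, formJ_eq, Matrix.transpose_submatrix, Matrix.submatrix_mul_equiv]

lemma ext_four {A B : Matrix (Fin 4) (Fin 4) ℂ}
    (h : ∀ i, A i 0 = B i 0 ∧ A i 1 = B i 1 ∧ A i 2 = B i 2 ∧ A i 3 = B i 3) : A = B := by
  ext i j
  fin_cases j
  exacts [(h i).1, (h i).2.1, (h i).2.2.1, (h i).2.2.2]

lemma forall_four {p : Fin 4 → Prop} (h0 : p 0) (h1 : p 1) (h2 : p 2) (h3 : p 3) (i : Fin 4) :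
    p i := by
  fin_cases i
  exacts [h0, h1, h2, h3]

lemma smul_idx (r : ℂ) (N : Matrix (Fin 4) (Fin 4) ℂ) :
    r • N.submatrix idx idx = (r • N).submatrix idx idx := rfl

lemma trace_idx (N : Matrix (Fin 4) (Fin 4) ℂ) : (N.submatrix idx idx).trace = N.trace :=
  Equiv.sum_comp idx fun i => N i i

lemma sum_bits (f : (Fin 4 → Fin 2) → ℂ) :
    ∑ c, f c = ∑ r : Fin 2 × Fin 2, ∑ s : Fin 2 × Fin 2, f ![r.1, r.2, s.1, s.2] := by
  rw [← Fintype.sum_prod_type' (f := fun r s : Fin 2 × Fin 2 => f ![r.1, r.2, s.1, s.2])]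
  refine Fintype.sum_equiv
    ⟨fun c => ((c 0, c 1), (c 2, c 3)), fun p => ![p.1.1, p.1.2, p.2.1, p.2.2], ?_, ?_⟩ _ _ ?_
  · intro c; ext i; fin_cases i <;> rfl
  · intro p; rfl
  · intro c
    congr 1
    ext i; fin_cases i <;> rfl

lemma flat_cobGate (A1 A2 A3 A4 : Matrix (Fin 2) (Fin 2) ℂ) (T : (Fin 4 → Fin 2) → ℂ) :
    flat (cobGate ![A1, A2, A3, A4] T) = (A1 ⊗ₖ A2) * flat T * (A3 ⊗ₖ A4)ᵀ := by
  ext r c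
  simp only [flat, cobGate, sum_bits, Matrix.of_apply, Matrix.mul_apply, Matrix.transpose_apply,
    Matrix.kroneckerMap_apply, Finset.sum_mul]
  rw [Finset.sum_comm]
  refine Finset.sum_congr rfl fun s _ => Finset.sum_congr rfl fun t _ => ?_
  rw [Fin.prod_univ_four]
  change A1 r.1 t.1 * A2 r.2 t.2 * A3 c.1 s.1 * A4 c.2 s.2 * _ = _
  ring

lemma symp_conj (A : Matrix (Fin 2) (Fin 2) ℂ) : Aᵀ * symp * A = A.det • symp := by
  rw [← Matrix.ext_iff]
  simp only [Fin.forall_fin_two]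
  refine ⟨⟨?_, ?_⟩, ?_, ?_⟩ <;>
    simp [symp, Matrix.mul_apply, Fin.sum_univ_two, Matrix.det_fin_two] <;> ring

lemma formJ_conj (A B : Matrix (Fin 2) (Fin 2) ℂ) :
    (A ⊗ₖ B)ᵀ * formJ * (A ⊗ₖ B) = (A.det * B.det) • formJ := by
  rw [formJ, ← Matrix.kroneckerMap_transpose, ← Matrix.mul_kronecker_mul,
    ← Matrix.mul_kronecker_mul, symp_conj, symp_conj, Matrix.smul_kronecker,
    Matrix.kronecker_smul, smul_smul]

lemma covP_cobGate (A1 A2 A3 A4 : Matrix (Fin 2) (Fin 2) ℂ) (T : (Fin 4 → Fin 2) → ℂ) :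
    covP (cobGate ![A1, A2, A3, A4] T) * (A1 ⊗ₖ A2) =
      (A1.det * A2.det * (A3.det * A4.det)) • ((A1 ⊗ₖ A2) * covP T) := by
  have h1 := formJ_conj A1 A2
  have h2 := formJ_conj A3 A4
  rw [covP, flat_cobGate]
  set U := A1 ⊗ₖ A2
  set V := A3 ⊗ₖ A4
  calc _ = U * flat T * (Vᵀ * formJ * V) * (flat T)ᵀ * (Uᵀ * formJ * U) := by
        simp only [Matrix.transpose_mul, Matrix.transpose_transpose, Matrix.mul_assoc]
    _ = _ := by
        rw [h1, h2, covP]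
        simp only [Matrix.mul_smul, Matrix.smul_mul, smul_smul, Matrix.mul_assoc]

/-- `covP exGate` in lexicographic order: its eigenvalues are `0, 0, -2, -2`, and `-2` has a
nontrivial Jordan block. -/
def exP : Matrix (Fin 4) (Fin 4) ℂ :=
  !![0, -1, -1, 0; 1, -2, -2, 1; 1, -2, -2, 1; 0, -1, -1, 0]

lemma flat_exGate : flat exGate =
    (!![1, 0, 1, 0; 1, 0, 0, 1; 1, 0, 0, 1; 0, 1, 0, 1] :
      Matrix (Fin 4) (Fin 4) ℂ).submatrix idx idx := by
  rw [← Matrix.ext_iff]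
  simp [Prod.forall, Fin.forall_fin_two, idx00, idx01, idx10, idx11, flat, exGate, ket]

lemma covP_exGate : covP exGate = exP.submatrix idx idx := by
  rw [covP_eq flat_exGate]
  congr 1
  refine ext_four (forall_four ?_ ?_ ?_ ?_) <;>
    simp only [Matrix.mul_apply, Matrix.transpose_apply, Fin.sum_univ_four, gramJ, exP,
      Matrix.of_apply, Matrix.cons_val] <;>
    norm_num

lemma subPf_odd (Ξ : Matrix (Fin 4) (Fin 4) ℂ) (I : Finset (Fin 4)) (h : Odd I.card) :
    subPf Ξ I = 0 := by
  obtain ⟨k, hk⟩ := h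
  have hI : I.Nonempty := Finset.card_pos.1 (by omega)
  have hodd : Odd I.card := ⟨k, hk⟩
  rw [subPf, hk]
  simp only [subPfAux, dif_pos hI, if_pos hodd]

lemma subPfAux_empty (Ξ : Matrix (Fin 4) (Fin 4) ℂ) (k : ℕ) : subPfAux Ξ k ∅ = 1 := by
  cases k <;> simp [subPfAux]

lemma subPfAux_pair (Ξ : Matrix (Fin 4) (Fin 4) ℂ) (k : ℕ) (i j : Fin 4) (h : i < j) :
    subPfAux Ξ (k + 1) {i, j} = Ξ i j := by
  have hmin (hI : ({i, j} : Finset (Fin 4)).Nonempty) : Finset.min' {i, j} hI = i := by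
    rw [Finset.min'_pair, min_eq_left h.le]
  have hij : i ≠ j := h.ne
  have he : ({i, j} : Finset (Fin 4)).erase i = {j} := by
    rw [Finset.erase_insert]; simpa using hij
  have hf : ({i, j} : Finset (Fin 4)).filter (fun k => k ≤ j) = {i, j} := by
    ext k; simp; rintro (rfl | rfl); exacts [h.le, le_rfl]
  have hc : ({i, j} : Finset (Fin 4)).card = 2 := Finset.card_pair hij
  have hodd : ¬ Odd 2 := by decide
  rw [subPfAux, dif_pos (by simp), hc, if_neg hodd, hmin, he, Finset.sum_singleton, hf, hc,
    Finset.erase_singleton, subPfAux_empty]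
  ring

lemma subPf_pair (Ξ : Matrix (Fin 4) (Fin 4) ℂ) (i j : Fin 4) (h : i < j) :
    subPf Ξ {i, j} = Ξ i j := by
  rw [subPf, Finset.card_pair h.ne, subPfAux_pair _ _ _ _ h]

lemma subPf_four (Ξ : Matrix (Fin 4) (Fin 4) ℂ) :
    subPf Ξ {0, 1, 2, 3} = Ξ 0 1 * Ξ 2 3 - Ξ 0 2 * Ξ 1 3 + Ξ 0 3 * Ξ 1 2 := by
  have hmin (hI : ({0, 1, 2, 3} : Finset (Fin 4)).Nonempty) :
      Finset.min' {0, 1, 2, 3} hI = 0 := rfl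
  have he : ({0, 1, 2, 3} : Finset (Fin 4)).erase 0 = {1, 2, 3} := by decide
  have hc : ({0, 1, 2, 3} : Finset (Fin 4)).card = 4 := by decide
  have hodd : ¬ Odd 4 := by decide
  have hsub (I : Finset (Fin 4)) (i j : Fin 4) (h : i < j) (hI : I = {i, j}) :
      subPfAux Ξ 3 I = Ξ i j := by
    rw [hI, subPfAux_pair _ _ _ _ h]
  have f1 : (({0, 1, 2, 3} : Finset (Fin 4)).filter (fun k => k ≤ 1)).card = 2 := by decide
  have f2 : (({0, 1, 2, 3} : Finset (Fin 4)).filter (fun k => k ≤ 2)).card = 3 := by decide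
  have f3 : (({0, 1, 2, 3} : Finset (Fin 4)).filter (fun k => k ≤ 3)).card = 4 := by decide
  rw [subPf, hc, subPfAux, dif_pos (by simp), hc, if_neg hodd, hmin, he,
    Finset.sum_insert (by decide), Finset.sum_insert (by decide), Finset.sum_singleton,
    f1, f2, f3, hsub _ 2 3 (by decide) (by decide), hsub _ 1 3 (by decide) (by decide),
    hsub _ 1 2 (by decide) (by decide)]
  ring

/-- The matchgate identity: a sub-Pfaffian vector takes the value `1` at `0000`, so the identity is
the expansion of the `4 × 4` Pfaffian. -/
lemma sPf_matchgate (Ξ : Matrix (Fin 4) (Fin 4) ℂ) :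
    sPf Ξ ![0,0,0,0] * sPf Ξ ![1,1,1,1] - sPf Ξ ![0,0,1,1] * sPf Ξ ![1,1,0,0]
      + (sPf Ξ ![0,1,0,1] * sPf Ξ ![1,0,1,0] - sPf Ξ ![0,1,1,0] * sPf Ξ ![1,0,0,1]) = 0 := by
  have e0 : supp ![0,0,0,0] = ∅ := by decide
  have e1 : supp ![1,1,1,1] = {0,1,2,3} := by decide
  have e2 : supp ![0,0,1,1] = {2,3} := by decide
  have e3 : supp ![1,1,0,0] = {0,1} := by decide
  have e4 : supp ![0,1,0,1] = {1,3} := by decide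
  have e5 : supp ![1,0,1,0] = {0,2} := by decide
  have e6 : supp ![0,1,1,0] = {1,2} := by decide
  have e7 : supp ![1,0,0,1] = {0,3} := by decide
  have h0 : subPf Ξ ∅ = 1 := by simp [subPf, subPfAux]
  simp only [sPf, e0, e1, e2, e3, e4, e5, e6, e7, h0, subPf_four]
  rw [subPf_pair _ _ _ (by decide), subPf_pair _ _ _ (by decide), subPf_pair _ _ _ (by decide),
    subPf_pair _ _ _ (by decide), subPf_pair _ _ _ (by decide), subPf_pair _ _ _ (by decide)]
  ring

/-- For an even gate the flattening is block diagonal, with `2 × 2` blocks on `{00, 11}` and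
`{01, 10}`. The matchgate identity says that the block determinants sum to zero, so both vanish
once the flattening is singular. The blocks of `covP T` then also have determinant zero, so each
satisfies `B² = tr(B) B`, and the two trace conditions force both traces to equal `-2 l`. -/
lemma covP_sq_of_even (T : (Fin 4 → Fin 2) → ℂ) (l : ℂ)
    (hodd : ∀ b, Odd (supp b).card → T b = 0)
    (hm : T ![0,0,0,0] * T ![1,1,1,1] - T ![0,0,1,1] * T ![1,1,0,0]
      + (T ![0,1,0,1] * T ![1,0,1,0] - T ![0,1,1,0] * T ![1,0,0,1]) = 0)
    (hdet : (flat T).det = 0)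
    (htr : (covP T).trace = -4 * l)
    (htr2 : (covP T * covP T).trace = 8 * l ^ 2) :
    covP T * covP T = (-2 * l) • covP T := by
  obtain ⟨a, b, c, d, ha, hb, hc, hd⟩ : ∃ a b c d, T ![0,0,0,0] = a ∧ T ![0,0,1,1] = b ∧
    T ![1,1,0,0] = c ∧ T ![1,1,1,1] = d := ⟨_, _, _, _, rfl, rfl, rfl, rfl⟩
  obtain ⟨e, f, g, h, he, hf, hg, hh⟩ : ∃ e f g h, T ![0,1,0,1] = e ∧ T ![0,1,1,0] = f ∧
    T ![1,0,0,1] = g ∧ T ![1,0,1,0] = h := ⟨_, _, _, _, rfl, rfl, rfl, rfl⟩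
  have hM : flat T = (!![a, 0, 0, b; 0, e, f, 0; 0, g, h, 0; c, 0, 0, d] :
      Matrix (Fin 4) (Fin 4) ℂ).submatrix idx idx := by
    ext ⟨r, r'⟩ ⟨s, s'⟩
    fin_cases r <;> fin_cases r' <;> fin_cases s <;> fin_cases s' <;>
      first
      | exact ha
      | exact hb
      | exact hc
      | exact hd
      | exact he
      | exact hf
      | exact hg
      | exact hh
      | exact hodd _ (by decide)
  rw [ha, hb, hc, hd, he, hf, hg, hh] at hm
  have hdet' : (a * d - b * c) * (e * h - f * g) = 0 := by
    rw [hM, Matrix.det_submatrix_equiv_self] at hdet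
    rw [← hdet]
    simp [Matrix.det_succ_row_zero, Fin.sum_univ_succ, Fin.succAbove]
    ring
  have hp : a * d - b * c = 0 := by
    have : (a * d - b * c) ^ 2 = 0 := by linear_combination (a * d - b * c) * hm - hdet'
    exact pow_eq_zero_iff two_ne_zero |>.1 this
  have hq : e * h - f * g = 0 := by linear_combination hm - hp
  have hP : covP T = (!![a * d + b * c, 0, 0, 2 * (a * b); 0, e * h + f * g, 2 * (e * f), 0;
        0, 2 * (g * h), e * h + f * g, 0; 2 * (c * d), 0, 0, a * d + b * c] :
        Matrix (Fin 4) (Fin 4) ℂ).submatrix idx idx := by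
    rw [covP_eq hM]
    congr 1
    refine ext_four (forall_four ?_ ?_ ?_ ?_) <;>
      simp only [Matrix.mul_apply, Matrix.transpose_apply, Fin.sum_univ_four, gramJ,
        Matrix.of_apply, Matrix.cons_val] <;>
      refine ⟨?_, ?_, ?_, ?_⟩ <;> ring
  rw [hP, Matrix.submatrix_mul_equiv, trace_idx] at htr2
  rw [hP, trace_idx] at htr
  rw [hP, Matrix.submatrix_mul_equiv]
  simp [Matrix.trace, Fin.sum_univ_four] at htr
  simp [Matrix.trace, Fin.sum_univ_four] at htr2
  have huv : a * d + b * c - (e * h + f * g) = 0 := by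
    have : (a * d + b * c - (e * h + f * g)) ^ 2 = 0 := by
      linear_combination htr2 / 2 + (a * d - b * c) * hp + (e * h - f * g) * hq
        - (a * d + b * c + (e * h + f * g) - 2 * l) * htr / 2
    exact pow_eq_zero_iff two_ne_zero |>.1 this
  have hu : a * d + b * c = -l := by linear_combination htr / 4 + huv / 2
  have hv : e * h + f * g = -l := by linear_combination htr / 4 - huv / 2
  rw [smul_idx]
  congr 1
  refine ext_four (forall_four ?_ ?_ ?_ ?_) <;>
    simp [Matrix.mul_apply, Fin.sum_univ_four] <;> refine ⟨?_, ?_⟩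
  · linear_combination 2 * (a * d + b * c) * hu - (a * d - b * c) * hp
  · linear_combination 4 * a * b * hu
  · linear_combination 2 * (e * h + f * g) * hv - (e * h - f * g) * hq
  · linear_combination 4 * e * f * hv
  · linear_combination 4 * g * h * hv
  · linear_combination 2 * (e * h + f * g) * hv - (e * h - f * g) * hq
  · linear_combination 4 * c * d * hu
  · linear_combination 2 * (a * d + b * c) * hu - (a * d - b * c) * hp

/-- Example 4.7: not every complement-invariant gate is Pfaffian. -/
theorem stmt9 :
    ¬ ∃ (A1 A2 A3 A4 : Matrix (Fin 2) (Fin 2) ℂ) (α : ℂ) (Ξ : Matrix (Fin 4) (Fin 4) ℂ),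
      IsUnit A1.det ∧ IsUnit A2.det ∧ IsUnit A3.det ∧ IsUnit A4.det ∧ IsSkew Ξ ∧
      cobGate ![A1, A2, A3, A4] exGate = fun b => α * sPf Ξ b := by
  rintro ⟨A1, A2, A3, A4, α, Ξ, h1, h2, h3, h4, -, h⟩
  have hconj := covP_cobGate A1 A2 A3 A4 exGate
  have hflat := flat_cobGate A1 A2 A3 A4 exGate
  have hU : IsUnit (A1 ⊗ₖ A2).det := by
    rw [Matrix.det_kronecker]; exact (h1.pow _).mul (h2.pow _)
  have hl : A1.det * A2.det * (A3.det * A4.det) ≠ 0 := ((h1.mul h2).mul (h3.mul h4)).ne_zero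
  have hT : ∀ b, cobGate ![A1, A2, A3, A4] exGate b = α * sPf Ξ b := fun b => congrFun h b
  generalize cobGate ![A1, A2, A3, A4] exGate = T at hconj hflat hT
  generalize A1.det * A2.det * (A3.det * A4.det) = l at hconj hl
  generalize A1 ⊗ₖ A2 = U at hconj hflat hU
  have hP : covP T = l • (U * covP exGate * U⁻¹) := by
    rw [← Matrix.smul_mul, ← hconj, Matrix.mul_nonsing_inv_cancel_right _ _ hU]
  have hPP : covP T * covP T = (l ^ 2) • (U * (covP exGate * covP exGate) * U⁻¹) := by
    rw [hP, Matrix.smul_mul, Matrix.mul_smul, smul_smul, ← sq]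
    congr 1
    rw [← Matrix.mul_assoc, ← Matrix.mul_assoc, Matrix.nonsing_inv_mul_cancel_right _ _ hU,
      ← Matrix.mul_assoc]
  have tr (X : Matrix (Fin 2 × Fin 2) (Fin 2 × Fin 2) ℂ) : (U * X * U⁻¹).trace = X.trace := by
    rw [Matrix.trace_mul_comm, ← Matrix.mul_assoc, Matrix.nonsing_inv_mul _ hU, Matrix.one_mul]
  have hdet0 : (flat exGate).det = 0 := by
    rw [flat_exGate, Matrix.det_submatrix_equiv_self]
    exact Matrix.det_zero_of_row_eq (i := 1) (j := 2) (by decide) rfl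
  have key := covP_sq_of_even T l
    (fun b hb => by rw [hT, sPf, subPf_odd _ _ hb, mul_zero])
    (by simp only [hT]; linear_combination α ^ 2 * sPf_matchgate Ξ)
    (by rw [hflat, Matrix.det_mul, Matrix.det_mul, hdet0]; simp)
    (by
      rw [hP, Matrix.trace_smul, tr, covP_exGate, trace_idx]
      simp [Matrix.trace, Fin.sum_univ_four, exP]
      ring)
    (by
      rw [hPP, Matrix.trace_smul, tr, covP_exGate, Matrix.submatrix_mul_equiv, trace_idx]
      simp [Matrix.trace, Fin.sum_univ_four, exP]
      ring)
  rw [hPP, hP, smul_smul] at key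
  have key2 := congrArg (fun X => U⁻¹ * X * U) key
  simp only [Matrix.mul_smul, Matrix.smul_mul, Matrix.mul_assoc,
    Matrix.nonsing_inv_mul_cancel_left _ _ hU, Matrix.nonsing_inv_mul _ hU, Matrix.mul_one] at key2
  rw [covP_exGate, Matrix.submatrix_mul_equiv] at key2
  -- The `(00, 00)` entries are `-2 l²` on the left and `0` on the right.
  have e := congrFun (congrFun key2 (0, 0)) (0, 0)
  simp [idx00, exP] at e
  exact hl e
end
end
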